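/- For n ∈ ℕ and p, k > 0, the function H(x) = x · |ₚβₖ⁽ⁿ⁾(x)| is strictly completely monotonic on (0, ∞): for every m ≥ 1 and x > 0, (−1)^m H^{(m)}(x) > 0. -/

import Mathlib

open MeasureTheory Real

noncomputable def pkBeta (p k x : ℝ) : ℝ :=
  (p / k) * ∫ t in Set.Ioi (0:ℝ), Real.exp (-(x * t) / k) / (1 + Real.exp (-t))

/-!
After rescaling `t`, the function `pkBeta p k` is the Laplace transform of `φ(t) = p σ(k t)`, where
`σ` is the sigmoid, a positive and increasing function. Hence `(-1)ⁿ` times its `n`-th derivative is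
the Laplace transform of `g(t) = tⁿ φ(t)`, and integration by parts turns multiplication by `x` into
differentiation under the transform: `x ∫ g(t) e^{-xt} dt = g(0) + ∫ g'(t) e^{-xt} dt`. The constant
`g(0)` disappears after one differentiation, and since `g' > 0` every further derivative in `x`
only contributes a factor `-t` to a positive integrand.
-/

open Asymptotics Filter ProbabilityTheory Set Topology

/-- The Laplace transform `s ↦ ∫₀^∞ f(t) e^{-st} dt` of a real function, with junk value `0` where
the integral diverges. -/
noncomputable def laplace (f : ℝ → ℝ) (s : ℝ) : ℝ :=
  ∫ t in Ioi 0, f t * exp (-(s * t))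

/-- The measure `f(t) dt` on the open half-line, for `f ≥ 0` there. The Laplace transform of `f` is
its moment generating function reflected at the origin, which gives access to the calculus of
`mgf`. -/
noncomputable def halfLineMeasure (f : ℝ → ℝ) : Measure ℝ :=
  (volume.restrict (Ioi 0)).withDensity fun t => ENNReal.ofReal (f t)

section ExponentialOrder

variable {f : ℝ → ℝ} {a b s : ℝ}

lemma isBigO_pow_mul_exp (hf : f =O[atTop] fun t => exp (a * t)) (hab : a < b) (m : ℕ) :
    (fun t => t ^ m * f t) =O[atTop] fun t => exp (b * t) := by
  refine ((isLittleO_pow_exp_pos_mul_atTop m (sub_pos.2 hab)).isBigO.mul hf).congr_right fun t => ?_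
  rw [← exp_add]
  ring_nf

lemma isBigO_mul_exp_neg (hf : f =O[atTop] fun t => exp (a * t)) (s : ℝ) :
    (fun t => f t * exp (-(s * t))) =O[atTop] fun t => exp (-(s - a) * t) := by
  refine (hf.mul (isBigO_refl (fun t => exp (-(s * t))) atTop)).congr_right fun t => ?_
  rw [← exp_add]
  ring_nf

lemma tendsto_mul_exp_neg_atTop (hf : f =O[atTop] fun t => exp (a * t)) (has : a < s) :
    Tendsto (fun t => f t * exp (-(s * t))) atTop (𝓝 0) := by
  refine (isBigO_mul_exp_neg hf s).trans_tendsto (tendsto_exp_atBot.comp ?_)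
  exact tendsto_id.const_mul_atTop_of_neg (neg_lt_zero.2 (sub_pos.2 has))

lemma integrableOn_mul_exp_neg (hfc : ContinuousOn f (Ici 0))
    (hf : f =O[atTop] fun t => exp (a * t)) (has : a < s) :
    IntegrableOn (fun t => f t * exp (-(s * t))) (Ioi 0) :=
  integrable_of_isBigO_exp_neg (sub_pos.2 has) (hfc.mul (by fun_prop)) (isBigO_mul_exp_neg hf s)

end ExponentialOrder

section Laplace

variable {f f' : ℝ → ℝ} {a s : ℝ}

lemma laplace_pos (hint : IntegrableOn (fun t => f t * exp (-(s * t))) (Ioi 0))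
    (hpos : ∀ t ∈ Ioi 0, 0 < f t) : 0 < laplace f s := by
  have hintegrand : ∀ t ∈ Ioi (0 : ℝ), 0 < f t * exp (-(s * t)) := fun t ht =>
    mul_pos (hpos t ht) (exp_pos _)
  rw [laplace, setIntegral_pos_iff_support_of_nonneg_ae
    (ae_restrict_of_forall_mem measurableSet_Ioi fun t ht => (hintegrand t ht).le) hint]
  have hsupport : Ioi 0 ⊆ Function.support fun t => f t * exp (-(s * t)) := fun t ht =>
    (hintegrand t ht).ne'
  rw [inter_eq_right.2 hsupport, volume_Ioi]
  exact ENNReal.zero_lt_top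

lemma mul_laplace (hfc : ContinuousOn f (Ici 0)) (hff' : ∀ t ∈ Ioi 0, HasDerivAt f (f' t) t)
    (hfc' : ContinuousOn f' (Ici 0)) (hf : f =O[atTop] fun t => exp (a * t))
    (hf' : f' =O[atTop] fun t => exp (a * t)) (has : a < s) :
    s * laplace f s = f 0 + laplace f' s := by
  have hexp (t : ℝ) : HasDerivAt (fun t => exp (-(s * t))) (-s * exp (-(s * t))) t := by
    simpa [mul_comm] using ((hasDerivAt_id t).const_mul s).neg.exp
  have hint : IntegrableOn (fun t => f t * (-s * exp (-(s * t)))) (Ioi 0) := by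
    simpa only [IntegrableOn, mul_left_comm] using
      (integrableOn_mul_exp_neg hfc hf has).const_mul (-s)
  have hzero : Tendsto (fun t => f t * exp (-(s * t))) (𝓝[>] 0) (𝓝 (f 0)) := by
    have hcont : ContinuousOn (fun t => f t * exp (-(s * t))) (Ici 0) := hfc.mul (by fun_prop)
    simpa using (hcont 0 self_mem_Ici).tendsto.mono_left (nhdsWithin_mono 0 Ioi_subset_Ici_self)
  have hparts := integral_Ioi_mul_deriv_eq_deriv_mul hff' (fun t _ => hexp t) hint
    (integrableOn_mul_exp_neg hfc' hf' has) hzero (tendsto_mul_exp_neg_atTop hf has)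
  simp only [mul_left_comm _ (-s), integral_const_mul] at hparts
  simp only [laplace]
  linarith

lemma integrable_halfLineMeasure_iff (hfm : AEMeasurable f (volume.restrict (Ioi 0)))
    (hnonneg : ∀ t ∈ Ioi 0, 0 ≤ f t) {g : ℝ → ℝ} :
    Integrable g (halfLineMeasure f) ↔ IntegrableOn (fun t => f t * g t) (Ioi 0) := by
  rw [halfLineMeasure, integrable_withDensity_iff_integrable_smul₀' hfm.ennreal_ofReal (by simp)]
  refine integrableOn_congr_fun (fun t ht => ?_) measurableSet_Ioi
  rw [ENNReal.toReal_ofReal (hnonneg t ht), smul_eq_mul]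

lemma integral_halfLineMeasure (hfm : AEMeasurable f (volume.restrict (Ioi 0)))
    (hnonneg : ∀ t ∈ Ioi 0, 0 ≤ f t) (g : ℝ → ℝ) :
    ∫ t, g t ∂halfLineMeasure f = ∫ t in Ioi 0, f t * g t := by
  rw [halfLineMeasure, integral_withDensity_eq_integral_toReal_smul₀ hfm.ennreal_ofReal (by simp)]
  refine setIntegral_congr_fun measurableSet_Ioi fun t ht => ?_
  simp only [ENNReal.toReal_ofReal (hnonneg t ht), smul_eq_mul]

lemma laplace_eq_mgf_neg (hfm : AEMeasurable f (volume.restrict (Ioi 0)))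
    (hnonneg : ∀ t ∈ Ioi 0, 0 ≤ f t) :
    laplace f = fun s => mgf id (halfLineMeasure f) (-s) := by
  ext s
  simp only [mgf, integral_halfLineMeasure hfm hnonneg, laplace, id, neg_mul]

lemma neg_mem_interior_integrableExpSet (hfc : ContinuousOn f (Ici 0))
    (hf : f =O[atTop] fun t => exp (a * t)) (has : a < s) (hnonneg : ∀ t ∈ Ioi 0, 0 ≤ f t) :
    -s ∈ interior (integrableExpSet id (halfLineMeasure f)) := by
  have hfm : AEMeasurable f (volume.restrict (Ioi 0)) :=
    (hfc.mono Ioi_subset_Ici_self).aemeasurable measurableSet_Ioi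
  refine mem_interior.2 ⟨Iio (-a), fun u hu => ?_, isOpen_Iio, neg_lt_neg has⟩
  refine (integrable_halfLineMeasure_iff hfm hnonneg).2 ?_
  simpa using integrableOn_mul_exp_neg hfc hf (lt_neg_of_lt_neg hu)

lemma iteratedDeriv_laplace (hfc : ContinuousOn f (Ici 0)) (hf : f =O[atTop] fun t => exp (a * t))
    (has : a < s) (hnonneg : ∀ t ∈ Ioi 0, 0 ≤ f t) (m : ℕ) :
    iteratedDeriv m (laplace f) s = (-1) ^ m * laplace (fun t => t ^ m * f t) s := by
  have hfm : AEMeasurable f (volume.restrict (Ioi 0)) :=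
    (hfc.mono Ioi_subset_Ici_self).aemeasurable measurableSet_Ioi
  rw [laplace_eq_mgf_neg hfm hnonneg, iteratedDeriv_comp_neg,
    iteratedDeriv_mgf (neg_mem_interior_integrableExpSet hfc hf has hnonneg),
    integral_halfLineMeasure hfm hnonneg, laplace, smul_eq_mul]
  simp only [id, neg_mul, mul_left_comm, mul_assoc]

lemma neg_one_pow_mul_iteratedDeriv_laplace (hfc : ContinuousOn f (Ici 0))
    (hf : f =O[atTop] fun t => exp (a * t)) (has : a < s) (hnonneg : ∀ t ∈ Ioi 0, 0 ≤ f t)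
    (m : ℕ) :
    (-1) ^ m * iteratedDeriv m (laplace f) s = laplace (fun t => t ^ m * f t) s := by
  rw [iteratedDeriv_laplace hfc hf has hnonneg, ← mul_assoc, ← mul_pow, neg_one_mul, neg_neg,
    one_pow, one_mul]

lemma neg_one_pow_mul_iteratedDeriv_laplace_pos (hfc : ContinuousOn f (Ici 0))
    (hf : f =O[atTop] fun t => exp (a * t)) (has : a < s) (hpos : ∀ t ∈ Ioi 0, 0 < f t) (m : ℕ) :
    0 < (-1) ^ m * iteratedDeriv m (laplace f) s := by
  rw [neg_one_pow_mul_iteratedDeriv_laplace hfc hf has fun t ht => (hpos t ht).le]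
  obtain ⟨b, hab, hbs⟩ := exists_between has
  exact laplace_pos (integrableOn_mul_exp_neg (by fun_prop) (isBigO_pow_mul_exp hf hab m) hbs)
    fun t ht => mul_pos (pow_pos ht m) (hpos t ht)

theorem neg_one_pow_mul_iteratedDeriv_mul_laplace_pos (hfc : ContinuousOn f (Ici 0))
    (hff' : ∀ t ∈ Ioi 0, HasDerivAt f (f' t) t) (hfc' : ContinuousOn f' (Ici 0))
    (hf : f =O[atTop] fun t => exp (a * t)) (hf' : f' =O[atTop] fun t => exp (a * t))
    (has : a < s) (hpos : ∀ t ∈ Ioi 0, 0 < f' t) {m : ℕ} (hm : 0 < m) :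
    0 < (-1) ^ m * iteratedDeriv m (fun y => y * laplace f y) s := by
  have hparts : (fun y => y * laplace f y) =ᶠ[𝓝 s] fun y => f 0 + laplace f' y := by
    filter_upwards [lt_mem_nhds has] with y hay using mul_laplace hfc hff' hfc' hf hf' hay
  rw [hparts.iteratedDeriv_eq, iteratedDeriv_const_add hm]
  exact neg_one_pow_mul_iteratedDeriv_laplace_pos hfc' hf' has hpos m

theorem neg_one_pow_mul_iteratedDeriv_mul_iteratedDeriv_laplace_pos (hfc : ContinuousOn f (Ici 0))
    (hff' : ∀ t ∈ Ioi 0, HasDerivAt f (f' t) t) (hfc' : ContinuousOn f' (Ici 0))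
    (hf : f =O[atTop] fun t => exp (a * t)) (hf' : f' =O[atTop] fun t => exp (a * t))
    (has : a < s) (hnonneg : ∀ t ∈ Ioi 0, 0 ≤ f t) (hpos : ∀ t ∈ Ioi 0, 0 < f' t)
    (n : ℕ) {m : ℕ} (hm : 0 < m) :
    0 < (-1) ^ m *
      iteratedDeriv m (fun y => y * ((-1) ^ n * iteratedDeriv n (laplace f) y)) s := by
  have hmoment : (fun y => y * ((-1) ^ n * iteratedDeriv n (laplace f) y)) =ᶠ[𝓝 s]
      fun y => y * laplace (fun t => t ^ n * f t) y := by
    filter_upwards [lt_mem_nhds has] with y hay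
    rw [neg_one_pow_mul_iteratedDeriv_laplace hfc hf hay hnonneg]
  obtain ⟨b, hab, hbs⟩ := exists_between has
  rw [hmoment.iteratedDeriv_eq]
  refine neg_one_pow_mul_iteratedDeriv_mul_laplace_pos
    (f' := fun t => n * (t ^ (n - 1) * f t) + t ^ n * f' t) (by fun_prop)
    (fun t ht => ?_) (by fun_prop) (isBigO_pow_mul_exp hf hab n)
    (((isBigO_pow_mul_exp hf hab (n - 1)).const_mul_left n).add (isBigO_pow_mul_exp hf' hab n))
    hbs (fun t ht => ?_) hm
  · simpa only [mul_assoc] using (hasDerivAt_pow n t).fun_mul (hff' t ht)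
  · have ht' : 0 < t := ht
    have := hnonneg t ht
    have := hpos t ht
    positivity

end Laplace

lemma pkBeta_eq_laplace_sigmoid (p : ℝ) {k : ℝ} (hk : 0 < k) :
    pkBeta p k = laplace fun t => p * sigmoid (k * t) := by
  ext x
  have hscale := integral_comp_mul_left_Ioi
    (fun t => exp (-(x * t) / k) / (1 + exp (-t))) 0 hk
  rw [mul_zero, smul_eq_mul] at hscale
  rw [pkBeta, div_eq_mul_inv, mul_assoc, ← hscale, ← integral_const_mul, laplace]
  congr with t
  rw [sigmoid_def, show -(x * (k * t)) / k = -(x * t) by field_simp]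
  ring

theorem pkBeta_H_strictly_completely_monotonic (p k : ℝ) (hp : 0 < p) (hk : 0 < k)
    (n : ℕ) (hn : 1 ≤ n) (m : ℕ) (hm : 1 ≤ m) (x : ℝ) (hx : 0 < x) :
    0 < (-1 : ℝ) ^ m *
      iteratedDeriv m (fun y : ℝ => y * ((-1 : ℝ) ^ n * iteratedDeriv n (pkBeta p k) y)) x := by
  have hderiv (t : ℝ) : HasDerivAt (fun t => p * sigmoid (k * t))
      (p * (sigmoid (k * t) * (1 - sigmoid (k * t)) * k)) t :=
    ((hasDerivAt_sigmoid (k * t)).comp t (hasDerivAt_const_mul k)).const_mul p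
  have hlim : Tendsto (fun t => sigmoid (k * t)) atTop (𝓝 1) :=
    tendsto_sigmoid_atTop.comp (tendsto_id.const_mul_atTop hk)
  have hlim' := ((hlim.mul (hlim.const_sub 1)).mul_const k).const_mul p
  rw [pkBeta_eq_laplace_sigmoid p hk]
  refine neg_one_pow_mul_iteratedDeriv_mul_iteratedDeriv_laplace_pos (a := 0) (by fun_prop)
    (fun t _ => hderiv t) (by fun_prop) ?_ ?_ hx (fun t _ => ?_) (fun t _ => ?_) n hm
  · simpa using (hlim.const_mul p).isBigO_one ℝ
  · simpa using hlim'.isBigO_one ℝ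
  · exact mul_nonneg hp.le (sigmoid_nonneg _)
  · have := sigmoid_pos (k * t)
    have := sub_pos.2 (sigmoid_lt_one (k * t))
    positivity
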